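/- Consider the hashing scheme HashScheme(U, k): f is chosen u.a.r. from a ⌈12 ln k⌉-wise independent family from U to {0,…,d₁−1} (d₁ the smallest power of 2 with k/ln k ≤ d₁), and h₁,…,h_{d₂} are chosen independently u.a.r. from a universal family from U to {0,…,d₃−1} with d₂ = ⌈8 ln k⌉ and d₃ = ⌈13 ln k⌉². Define hᵢ⁺(x) = f(x)·d₂d₃ + (i−1)·d₃ + hᵢ(x), and for q ∈ {0,…,d₁d₂d₃−1} let H⁺_inv(q) = {x ∈ U : hᵢ⁺(x) = q for some i}. Then for any S ⊆ U with |S| = k ≥ 2, with probability at least 1 − 4/(k³ ln k), there exist k values q₁,…,q_k such that the sets H⁺_inv(q₁),…,H⁺_inv(q_k) are pairwise disjoint and each contains exactly one element of S. -/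

import Mathlib

open Finset
open scoped Classical

/-- The combined hash functions `hᵢ⁺(x) = f(x)·d₂d₃ + i·d₃ + hᵢ(x)` of HashScheme
(`i` is 0-indexed here). -/
def hashPlus {U : Type*} (d₂ d₃ : ℕ) {d₁ : ℕ} (f : U → Fin d₁)
    (h : Fin d₂ → U → Fin d₃) (i : Fin d₂) (x : U) : ℕ :=
  (f x : ℕ) * (d₂ * d₃) + (i : ℕ) * d₃ + (h i x : ℕ)

/-- If `S` meets the fibre of `a` under a random `j`-wise independent function in at least `t`
points with probability `p`, then `p · t(t-1)⋯(t-j+1) ≤ (|S| / d)^j`. -/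
theorem card_large_fiber_mul_le {U ι : Type*} [Fintype ι] [DecidableEq U] {d j t : ℕ}
    (F : ι → U → Fin d)
    (hF : ∀ x : Fin j → U, Function.Injective x → ∀ a : Fin j → Fin d,
      ((univ : Finset ι).filter (fun i => ∀ s, F i (x s) = a s)).card * d ^ j = Fintype.card ι)
    (S : Finset U) (a : Fin d) :
    ((univ : Finset ι).filter (fun i => t ≤ (S.filter (fun x => F i x = a)).card)).card
      * t.descFactorial j * d ^ j ≤ S.card ^ j * Fintype.card ι := by
  have hlow : ∀ i, (S.filter (fun x => F i x = a)).card.descFactorial j ≤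
      ((univ : Finset (Fin j ↪ S)).filter (fun x => ∀ s, F i (x s) = a)).card := by
    intro i
    have hcard : Fintype.card (Fin j ↪ (S.filter (fun x => F i x = a))) =
        (S.filter (fun x => F i x = a)).card.descFactorial j := by
      rw [Fintype.card_embedding_eq, Fintype.card_coe, Fintype.card_fin]
    rw [← hcard, ← Finset.card_univ]
    let g : (S.filter (fun x => F i x = a)) ↪ S :=
      ⟨fun y => ⟨y.1, (Finset.mem_filter.1 y.2).1⟩, fun y z h =>
        Subtype.ext (congrArg (fun w : S => (w : U)) h)⟩
    refine Finset.card_le_card_of_injOn (fun x => x.trans g) ?_ ?_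
    · intro x _
      simp only [Finset.coe_filter, Finset.mem_univ, true_and, Set.mem_ofPred_eq]
      exact fun s => (Finset.mem_filter.1 (x s).2).2
    · intro x _ y _ h
      exact DFunLike.ext _ _ fun s => g.injective (DFunLike.congr_fun h s)
  have hsum : ((univ : Finset ι).filter
        (fun i => t ≤ (S.filter (fun x => F i x = a)).card)).card * t.descFactorial j ≤
      ∑ i : ι, ((univ : Finset (Fin j ↪ S)).filter (fun x => ∀ s, F i (x s) = a)).card := by
    rw [← smul_eq_mul]
    refine (Finset.card_nsmul_le_sum _ _ _ fun i hi => ?_).trans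
      (Finset.sum_le_sum_of_subset (Finset.filter_subset _ _))
    exact (Nat.descFactorial_le j (Finset.mem_filter.1 hi).2).trans (hlow i)
  have hswap : ∑ i : ι, ((univ : Finset (Fin j ↪ S)).filter
        (fun x => ∀ s, F i (x s) = a)).card =
      ∑ x : Fin j ↪ S, ((univ : Finset ι).filter (fun i => ∀ s, F i (x s) = a)).card :=
    Finset.sum_card_bipartiteAbove_eq_sum_card_bipartiteBelow
      (fun (i : ι) (x : Fin j ↪ S) => ∀ s, F i (x s) = a)
  calc _ ≤ (∑ x : Fin j ↪ S,
        ((univ : Finset ι).filter (fun i => ∀ s, F i (x s) = a)).card) * d ^ j := by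
        rw [← hswap]; exact Nat.mul_le_mul_right _ hsum
    _ = ∑ _x : Fin j ↪ S, Fintype.card ι := by
        rw [Finset.sum_mul]
        exact Finset.sum_congr rfl fun x _ =>
          hF (fun s => x s) (Subtype.val_injective.comp x.injective) fun _ => a
    _ = S.card.descFactorial j * Fintype.card ι := by
        rw [Finset.sum_const, Finset.card_univ, Fintype.card_embedding_eq, Fintype.card_coe,
          Fintype.card_fin, smul_eq_mul]
    _ ≤ _ := Nat.mul_le_mul_right _ (Nat.descFactorial_le_pow _ _)

/-- A random member of a universal family into `m ^ 2` values is injective on a given set of at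
most `m` elements with probability at least `1 / 2`. -/
theorem two_mul_card_not_injOn_le {U ι : Type*} [Fintype ι] [DecidableEq U] {m : ℕ} (hm : 0 < m)
    (H : ι → U → Fin (m ^ 2))
    (hH : ∀ x y : U, x ≠ y →
      ((univ : Finset ι).filter (fun i => H i x = H i y)).card * m ^ 2 ≤ Fintype.card ι)
    (T : Finset U) (hT : T.card ≤ m) :
    2 * ((univ : Finset ι).filter (fun i => ¬ Set.InjOn (H i) T)).card ≤ Fintype.card ι := by
  have hsum : ((univ : Finset ι).filter (fun i => ¬ Set.InjOn (H i) T)).card * 2 ≤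
      ∑ i : ι, (T.offDiag.filter (fun p => H i p.1 = H i p.2)).card := by
    rw [← smul_eq_mul]
    refine (Finset.card_nsmul_le_sum _ _ _ fun i hi => ?_).trans
      (Finset.sum_le_sum_of_subset (Finset.filter_subset _ _))
    have hni := (Finset.mem_filter.1 hi).2
    simp only [Set.InjOn, not_forall] at hni
    obtain ⟨x, hx, y, hy, hxy, hne⟩ := hni
    have hpair : ((x, y) : U × U) ≠ (y, x) := fun h => hne (Prod.ext_iff.1 h).1
    refine (Finset.card_pair hpair).ge.trans (Finset.card_le_card ?_)
    intro p hp
    simp only [Finset.mem_insert, Finset.mem_singleton] at hp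
    rcases hp with rfl | rfl
    · exact Finset.mem_filter.2 ⟨Finset.mem_offDiag.2 ⟨hx, hy, hne⟩, hxy⟩
    · exact Finset.mem_filter.2 ⟨Finset.mem_offDiag.2 ⟨hy, hx, Ne.symm hne⟩, hxy.symm⟩
  have hswap : ∑ i : ι, (T.offDiag.filter (fun p => H i p.1 = H i p.2)).card =
      ∑ p ∈ T.offDiag, ((univ : Finset ι).filter (fun i => H i p.1 = H i p.2)).card :=
    Finset.sum_card_bipartiteAbove_eq_sum_card_bipartiteBelow
      (fun (i : ι) (p : U × U) => H i p.1 = H i p.2)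
  have hoff : T.offDiag.card ≤ m ^ 2 := by
    rw [Finset.offDiag_card]
    exact (Nat.sub_le _ _).trans (by nlinarith)
  refine Nat.le_of_mul_le_mul_right ?_ (pow_pos hm 2)
  calc _ ≤ (∑ p ∈ T.offDiag,
        ((univ : Finset ι).filter (fun i => H i p.1 = H i p.2)).card) * m ^ 2 := by
        rw [← hswap, mul_comm 2]; exact Nat.mul_le_mul_right _ hsum
    _ ≤ ∑ _p ∈ T.offDiag, Fintype.card ι := by
        rw [Finset.sum_mul]
        exact Finset.sum_le_sum fun p hp => hH _ _ (Finset.mem_offDiag.1 hp).2.2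
    _ ≤ _ := by
        rw [Finset.sum_const, smul_eq_mul, mul_comm]
        exact Nat.mul_le_mul_left _ hoff

theorem hashPlus_lt {U : Type*} {d₁ d₂ d₃ : ℕ} (f : U → Fin d₁) (h : Fin d₂ → U → Fin d₃)
    (i : Fin d₂) (x : U) : hashPlus d₂ d₃ f h i x < d₁ * d₂ * d₃ := by
  have h1 : (i : ℕ) * d₃ + (h i x : ℕ) < d₂ * d₃ := by
    have := Nat.mul_le_mul_right d₃ (Nat.succ_le_of_lt i.2)
    have := (h i x).2
    rw [Nat.succ_mul] at *
    omega
  have h2 := Nat.mul_le_mul_right (d₂ * d₃) (Nat.succ_le_of_lt (f x).2)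
  rw [Nat.succ_mul] at h2
  rw [hashPlus, mul_assoc]
  omega

/-- The value `hashPlus d₂ d₃ f h i x` determines `f x`, `i` and `h i x`. -/
theorem hashPlus_eq_hashPlus {U : Type*} {d₁ d₂ d₃ : ℕ} {f : U → Fin d₁}
    {h : Fin d₂ → U → Fin d₃} {i i' : Fin d₂} {x x' : U}
    (he : hashPlus d₂ d₃ f h i x = hashPlus d₂ d₃ f h i' x') :
    f x = f x' ∧ i = i' ∧ h i x = h i x' := by
  have key : ∀ (i : Fin d₂) (x : U), hashPlus d₂ d₃ f h i x =
      (finProdFinEquiv (f x, finProdFinEquiv (i, h i x)) : Fin (d₁ * (d₂ * d₃))) := by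
    intro i x
    simp only [hashPlus, finProdFinEquiv_apply_val]
    ring
  rw [key, key] at he
  have := finProdFinEquiv.injective (Fin.ext he)
  simp only [Prod.mk.injEq, EmbeddingLike.apply_eq_iff_eq] at this
  obtain ⟨h1, rfl, h3⟩ := this
  exact ⟨h1, rfl, h3⟩

/-- If in every bucket of `f` some `h i` is injective on the part of `S` in that bucket, then
`S` is isolated by `|S|` values whose preimages are pairwise disjoint. -/
theorem exists_isolating_values {U : Type*} [DecidableEq U] {k d₁ d₂ d₃ : ℕ} (f : U → Fin d₁)
    (h : Fin d₂ → U → Fin d₃) (S : Finset U) (hS : S.card = k)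
    (hinj : ∀ a, ∃ i, Set.InjOn (h i) (S.filter (fun x => f x = a))) :
    ∃ q : Fin k → ℕ, (∀ t, q t < d₁ * d₂ * d₃) ∧
      (∀ t t', t ≠ t' → Disjoint {x : U | ∃ i, hashPlus d₂ d₃ f h i x = q t}
        {x : U | ∃ i, hashPlus d₂ d₃ f h i x = q t'}) ∧
      (∀ t, (S.filter (fun x => ∃ i, hashPlus d₂ d₃ f h i x = q t)).card = 1) := by
  choose c hc using hinj
  let e := (S.equivFinOfCardEq hS).symm
  have hcol : ∀ x ∈ S, ∀ y ∈ S, f x = f y → h (c (f x)) x = h (c (f x)) y → x = y := by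
    intro x hx y hy hf hh
    exact hc (f x) (by simp [hx]) (by simp [hy, hf]) hh
  refine ⟨fun t => hashPlus d₂ d₃ f h (c (f (e t))) (e t), fun t => hashPlus_lt _ _ _ _, ?_, ?_⟩
  · intro t t' hne
    rw [Set.disjoint_left]
    rintro y ⟨i, hi⟩ ⟨i', hi'⟩
    obtain ⟨hf, rfl, hh⟩ := hashPlus_eq_hashPlus hi
    obtain ⟨hf', rfl, hh'⟩ := hashPlus_eq_hashPlus hi'
    have hff : f (e t) = f (e t') := hf.symm.trans hf'
    rw [← hff] at hh'
    exact hne (e.injective (Subtype.ext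
      (hcol _ (e t).2 _ (e t').2 hff (hh.symm.trans hh'))))
  · intro t
    rw [Finset.card_eq_one]
    refine ⟨e t, ?_⟩
    ext y
    simp only [Finset.mem_filter, Finset.mem_singleton]
    constructor
    · rintro ⟨hy, i, hi⟩
      obtain ⟨hf, rfl, hh⟩ := hashPlus_eq_hashPlus hi
      exact (hcol _ (e t).2 _ hy hf.symm hh.symm).symm
    · rintro rfl
      exact ⟨(e t).2, _, rfl⟩

/-- With `⌈4 ln k⌉`-wise independence into `d ≥ k / ln k` values, a given bucket receives more than
`⌈13 ln k⌉` of `k` elements with probability at most `k⁻⁴`. -/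
theorem card_overfull_bucket_le {U ι : Type*} [Fintype ι] [DecidableEq U] {k d : ℕ} (hk : 2 ≤ k)
    (hd : (k : ℝ) / Real.log k ≤ d) (F : ι → U → Fin d)
    (hF : ∀ x : Fin ⌈4 * Real.log k⌉₊ → U, Function.Injective x →
      ∀ a : Fin ⌈4 * Real.log k⌉₊ → Fin d,
      ((univ : Finset ι).filter (fun i => ∀ s, F i (x s) = a s)).card * d ^ ⌈4 * Real.log k⌉₊
        = Fintype.card ι)
    (S : Finset U) (hS : S.card = k) (a : Fin d) :
    (((univ : Finset ι).filter
      (fun i => ⌈13 * Real.log k⌉₊ < (S.filter (fun x => F i x = a)).card)).card : ℝ)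
      ≤ Fintype.card ι / (k : ℝ) ^ 4 := by
  have hk1 : (1 : ℝ) < k := by exact_mod_cast hk
  have hL : 0 < Real.log k := Real.log_pos hk1
  set L := Real.log k with hLdef
  set j := ⌈4 * L⌉₊ with hj
  set m := ⌈13 * L⌉₊ with hm
  have hkd : (k : ℝ) ≤ d * L := (div_le_iff₀ hL).1 hd
  have hd0 : (0 : ℝ) < d := (div_pos (by linarith) hL).trans_le hd
  have hj1 : (j : ℝ) < 4 * L + 1 := Nat.ceil_lt_add_one (by positivity)
  have hj2 : 4 * L ≤ j := Nat.le_ceil _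
  have hm1 : 13 * L ≤ m := Nat.le_ceil _
  have hjm : j ≤ m := Nat.ceil_mono (by linarith)
  have main := card_large_fiber_mul_le (t := m + 1) F hF S a
  rw [hS] at main
  simp only [Nat.succ_le_iff] at main
  set B := ((univ : Finset ι).filter
    (fun i => m < (S.filter (fun x => F i x = a)).card)).card with hB
  have hdesc : (9 * L) ^ j ≤ ((m + 1).descFactorial j : ℝ) := by
    have h1 : ((m + 1 + 1 - j) ^ j : ℕ) ≤ (m + 1).descFactorial j :=
      Nat.pow_sub_le_descFactorial _ _
    have h2 : (((m + 1 + 1 - j : ℕ) : ℝ)) ^ j ≤ ((m + 1).descFactorial j : ℝ) := by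
      exact_mod_cast h1
    refine le_trans (pow_le_pow_left₀ (by positivity) ?_ j) h2
    rw [Nat.cast_sub (by omega)]
    push_cast
    linarith
  have hk4 : (k : ℝ) ^ 4 ≤ 9 ^ j := by
    calc (k : ℝ) ^ 4 = Real.exp (4 * L) := by
          rw [← Real.exp_log (show (0 : ℝ) < k by linarith), ← Real.exp_nat_mul]
          norm_num [hLdef]
      _ ≤ Real.exp (j * 1) := Real.exp_le_exp.2 (by linarith)
      _ = Real.exp 1 ^ j := Real.exp_nat_mul _ _
      _ ≤ 9 ^ j := pow_le_pow_left₀ (Real.exp_pos _).le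
          (by linarith [Real.exp_one_lt_d9]) j
  have main' : (B : ℝ) * ((m + 1).descFactorial j : ℝ) * (d : ℝ) ^ j
      ≤ (k : ℝ) ^ j * Fintype.card ι := by exact_mod_cast main
  rw [le_div_iff₀ (by positivity)]
  refine le_of_mul_le_mul_right ?_ (show 0 < (d * L) ^ j by positivity)
  calc (B : ℝ) * (k : ℝ) ^ 4 * (d * L) ^ j ≤ B * 9 ^ j * (d * L) ^ j := by gcongr
    _ = B * (9 * L) ^ j * (d : ℝ) ^ j := by rw [mul_pow, mul_pow]; ring
    _ ≤ B * ((m + 1).descFactorial j : ℝ) * (d : ℝ) ^ j := by gcongr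
    _ ≤ (k : ℝ) ^ j * Fintype.card ι := main'
    _ ≤ (d * L) ^ j * Fintype.card ι := by gcongr
    _ = Fintype.card ι * (d * L) ^ j := mul_comm _ _

/-- Among `⌈8 ln k⌉` independent members of a universal family into `m ^ 2` values, none is
injective on a given set of at most `m` elements with probability at most `k⁻⁴`. -/
theorem card_forall_not_injOn_le {U ι : Type*} [Fintype ι] [DecidableEq U] {k m : ℕ} (hk : 2 ≤ k)
    (hm : 0 < m) (H : ι → U → Fin (m ^ 2))
    (hH : ∀ x y : U, x ≠ y →
      ((univ : Finset ι).filter (fun i => H i x = H i y)).card * m ^ 2 ≤ Fintype.card ι)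
    (T : Finset U) (hT : T.card ≤ m) :
    (((univ : Finset (Fin ⌈8 * Real.log k⌉₊ → ι)).filter
      (fun g => ∀ i, ¬ Set.InjOn (H (g i)) T)).card : ℝ)
      ≤ (Fintype.card ι : ℝ) ^ ⌈8 * Real.log k⌉₊ / (k : ℝ) ^ 4 := by
  have hk1 : (1 : ℝ) < k := by exact_mod_cast hk
  set n := ⌈8 * Real.log k⌉₊ with hn
  have hn1 : 8 * Real.log k ≤ n := Nat.le_ceil _
  have hL : 0 < Real.log k := Real.log_pos hk1
  have heq : (univ : Finset (Fin n → ι)).filter (fun g => ∀ i, ¬ Set.InjOn (H (g i)) T) =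
      Fintype.piFinset (fun _ => (univ : Finset ι).filter (fun i => ¬ Set.InjOn (H i) T)) := by
    ext g
    simp [Fintype.mem_piFinset]
  have h2 : 2 * (((univ : Finset ι).filter (fun i => ¬ Set.InjOn (H i) T)).card : ℝ)
      ≤ Fintype.card ι := by exact_mod_cast two_mul_card_not_injOn_le hm H hH T hT
  have hk4 : (k : ℝ) ^ 4 ≤ 2 ^ n := by
    calc (k : ℝ) ^ 4 = Real.exp (4 * Real.log k) := by
          rw [← Real.exp_log (show (0 : ℝ) < k by linarith), ← Real.exp_nat_mul]
          norm_num
      _ ≤ Real.exp (n * Real.log 2) :=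
          Real.exp_le_exp.2 (by nlinarith [Real.log_two_gt_d9])
      _ = 2 ^ n := by rw [Real.exp_nat_mul, Real.exp_log two_pos]
  rw [heq, Fintype.card_piFinset_const, le_div_iff₀ (by positivity)]
  push_cast
  calc _ ≤ (((univ : Finset ι).filter (fun i => ¬ Set.InjOn (H i) T)).card : ℝ) ^ n * 2 ^ n := by
        gcongr
    _ = (2 * (((univ : Finset ι).filter (fun i => ¬ Set.InjOn (H i) T)).card : ℝ)) ^ n := by
        rw [mul_pow, mul_comm]
    _ ≤ _ := by gcongr

/-- in HashScheme(U,k) — `f` drawn u.a.r. from a `⌈12 ln k⌉`-wise independent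
family into `{0,…,d₁−1}` (`d₁` the smallest power of two with `k/ln k ≤ d₁`), and
`h₁,…,h_{d₂}` drawn independently u.a.r. from a universal family into `{0,…,d₃−1}`
with `d₂ = ⌈8 ln k⌉`, `d₃ = ⌈13 ln k⌉²` — for any `S ⊆ U` with `|S| = k ≥ 2`, with
probability at least `1 − 4/(k³ ln k)` there exist `k` values `q₁,…,q_k` whose preimage
sets `H⁺_inv(qₜ) = {x : ∃ i, hᵢ⁺(x) = qₜ}` are pairwise disjoint and each contains
exactly one element of `S`. -/
theorem stmt8 {U ιf ιh : Type*} [Fintype U] [DecidableEq U] [Fintype ιf] [Fintype ιh]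
    (k d d₁ d₂ d₃ : ℕ) (hk : 2 ≤ k)
    (hd₂ : d₂ = ⌈8 * Real.log k⌉₊) (hd₃ : d₃ = ⌈13 * Real.log k⌉₊ ^ 2)
    (hd₁ : d₁ = 2 ^ d) (hlow : (k : ℝ) / Real.log k ≤ (d₁ : ℝ))
    (hmin : ∀ d' : ℕ, d' < d → ((2 : ℝ) ^ d' < (k : ℝ) / Real.log k))
    (F : ιf → U → Fin d₁)
    (hF : ∀ κ' ≤ ⌈12 * Real.log k⌉₊, ∀ x : Fin κ' → U, Function.Injective x →
      ∀ a : Fin κ' → Fin d₁,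
        ((Finset.univ : Finset ιf).filter (fun i => ∀ t, F i (x t) = a t)).card * d₁ ^ κ'
          = Fintype.card ιf)
    (Hh : ιh → U → Fin d₃)
    (huniv : ∀ x y : U, x ≠ y →
      ((Finset.univ : Finset ιh).filter (fun i => Hh i x = Hh i y)).card * d₃
        ≤ Fintype.card ιh)
    (S : Finset U) (hS : S.card = k) :
    (1 - 4 / ((k : ℝ) ^ 3 * Real.log k)) * (Fintype.card (ιf × (Fin d₂ → ιh)) : ℝ) ≤
      (((Finset.univ : Finset (ιf × (Fin d₂ → ιh))).filter (fun ω =>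
        ∃ q : Fin k → ℕ, (∀ t, q t < d₁ * d₂ * d₃) ∧
          (∀ t t', t ≠ t' →
            Disjoint {x : U | ∃ i, hashPlus d₂ d₃ (F ω.1) (fun i' => Hh (ω.2 i')) i x = q t}
              {x : U | ∃ i, hashPlus d₂ d₃ (F ω.1) (fun i' => Hh (ω.2 i')) i x = q t'}) ∧
          (∀ t, (S.filter (fun x =>
              ∃ i, hashPlus d₂ d₃ (F ω.1) (fun i' => Hh (ω.2 i')) i x = q t)).card = 1))).card
        : ℝ) := by
  have hk1 : (1 : ℝ) < k := by exact_mod_cast hk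
  have hL : 0 < Real.log k := Real.log_pos hk1
  obtain ⟨m, hm⟩ : ∃ m, m = ⌈13 * Real.log k⌉₊ := ⟨_, rfl⟩
  rw [← hm] at hd₃
  subst hd₂ hd₃
  set L := Real.log k with hLdef
  set n := ⌈8 * L⌉₊ with hn
  have hm0 : 0 < m := hm ▸ Nat.ceil_pos.2 (by positivity)
  have hd₁le : (d₁ : ℝ) ≤ 2 * (k / L) := by
    have hLk : L ≤ k := (Real.log_le_sub_one_of_pos (by linarith)).trans (by linarith)
    rcases d with _ | d
    · have : 1 ≤ (k : ℝ) / L := (one_le_div hL).2 hLk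
      rw [hd₁]; norm_num; linarith
    · have := hmin d (Nat.lt_succ_self d)
      rw [hd₁]; push_cast; rw [pow_succ]; linarith
  set N : ℝ := (Fintype.card ιf : ℝ) with hN
  set M : ℝ := (Fintype.card ιh : ℝ) ^ n with hM
  have htotal : (Fintype.card (ιf × (Fin n → ιh)) : ℝ) = N * M := by
    simp [hN, hM]
  set good := (Finset.univ : Finset (ιf × (Fin n → ιh))).filter (fun ω =>
        ∃ q : Fin k → ℕ, (∀ t, q t < d₁ * n * m ^ 2) ∧
          (∀ t t', t ≠ t' →
            Disjoint {x : U | ∃ i, hashPlus n (m ^ 2) (F ω.1) (fun i' => Hh (ω.2 i')) i x = q t}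
              {x : U | ∃ i, hashPlus n (m ^ 2) (F ω.1) (fun i' => Hh (ω.2 i')) i x = q t'}) ∧
          (∀ t, (S.filter (fun x =>
              ∃ i, hashPlus n (m ^ 2) (F ω.1) (fun i' => Hh (ω.2 i')) i x = q t)).card = 1))
    with hgood
  let overfull : Fin d₁ → Finset ιf := fun a =>
    univ.filter (fun i => m < (S.filter (fun x => F i x = a)).card)
  let colliding : ιf × Fin d₁ → Finset (Fin n → ιh) := fun p =>
    univ.filter (fun g => (S.filter (fun x => F p.1 x = p.2)).card ≤ m ∧
      ∀ i, ¬ Set.InjOn (Hh (g i)) (S.filter (fun x => F p.1 x = p.2)))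
  have hover : ∀ a, ((overfull a).card : ℝ) ≤ N / (k : ℝ) ^ 4 := by
    intro a
    simp only [overfull, hm]
    exact card_overfull_bucket_le hk hlow F (hF _ (Nat.ceil_mono (by linarith))) S hS a
  have hcoll : ∀ p, ((colliding p).card : ℝ) ≤ M / (k : ℝ) ^ 4 := by
    intro p
    by_cases hp : (S.filter (fun x => F p.1 x = p.2)).card ≤ m
    · simp only [colliding, hp, true_and]
      exact card_forall_not_injOn_le hk hm0 Hh huniv _ hp
    · simp only [colliding, hp, false_and, Finset.filter_false, Finset.card_empty]
      rw [Nat.cast_zero]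
      positivity
  have hcover : (univ : Finset (ιf × (Fin n → ιh))) ⊆ good ∪
      ((univ.biUnion fun a => overfull a ×ˢ univ) ∪
        (univ.biUnion fun p : ιf × Fin d₁ => {p.1} ×ˢ colliding p)) := by
    rintro ⟨i, g⟩ -
    by_contra hbad
    simp only [Finset.mem_union, not_or, Finset.mem_biUnion, Finset.mem_univ, true_and, not_exists,
      Finset.mem_product, Finset.mem_singleton, and_true, overfull, colliding,
      Finset.mem_filter, not_lt] at hbad
    obtain ⟨hg, hsmall, hinj⟩ := hbad
    refine hg (Finset.mem_filter.2 ⟨Finset.mem_univ _, ?_⟩)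
    refine exists_isolating_values (F i) (fun i' => Hh (g i')) S hS fun a => ?_
    by_contra hno
    exact hinj (i, a) ⟨rfl, hsmall a, not_exists.1 hno⟩
  have hcount : N * M ≤ good.card +
      (∑ a, ((overfull a).card : ℝ) * M + ∑ p, ((colliding p).card : ℝ)) := by
    have h1 : Fintype.card (ιf × (Fin n → ιh)) ≤ good.card +
        (∑ a, (overfull a).card * Fintype.card ιh ^ n + ∑ p, (colliding p).card) := by
      rw [← Finset.card_univ]
      refine (Finset.card_le_card hcover).trans ((Finset.card_union_le _ _).trans ?_)
      refine Nat.add_le_add_left ((Finset.card_union_le _ _).trans (Nat.add_le_add ?_ ?_)) _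
      · refine Finset.card_biUnion_le.trans (le_of_eq (Finset.sum_congr rfl fun a _ => ?_))
        simp [Finset.card_product]
      · refine Finset.card_biUnion_le.trans (le_of_eq (Finset.sum_congr rfl fun p _ => ?_))
        simp
    rw [← htotal, hM]
    exact_mod_cast h1
  have hNM : 0 ≤ N * M := by positivity
  have hsum₁ : ∑ a, ((overfull a).card : ℝ) * M ≤ d₁ * (N * M / (k : ℝ) ^ 4) := by
    refine (Finset.sum_le_card_nsmul _ _ (N * M / (k : ℝ) ^ 4) fun a _ => ?_).trans_eq (by simp)
    calc ((overfull a).card : ℝ) * M ≤ N / (k : ℝ) ^ 4 * M := by gcongr; exact hover a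
      _ = _ := by ring
  have hsum₂ : ∑ p, ((colliding p).card : ℝ) ≤ d₁ * (N * M / (k : ℝ) ^ 4) := by
    refine (Finset.sum_le_card_nsmul _ _ (M / (k : ℝ) ^ 4) fun p _ => hcoll p).trans_eq ?_
    simp only [Finset.card_univ, Fintype.card_prod, Fintype.card_fin, nsmul_eq_mul, hN]
    push_cast
    ring
  have hfail : (d₁ : ℝ) * (N * M / (k : ℝ) ^ 4) ≤ 2 / ((k : ℝ) ^ 3 * L) * (N * M) := by
    calc (d₁ : ℝ) * (N * M / (k : ℝ) ^ 4) ≤ 2 * (k / L) * (N * M / (k : ℝ) ^ 4) := by gcongr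
      _ = _ := by field_simp
  rw [htotal]
  have hsplit : (4 : ℝ) / ((k : ℝ) ^ 3 * L) = 2 / ((k : ℝ) ^ 3 * L) + 2 / ((k : ℝ) ^ 3 * L) := by
    ring
  rw [hsplit]
  linarith
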